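/- Let H be a Hopf algebra with invertible antipode, A a right H-comodule algebra with coinvariant subalgebra B, and f: H → A a total integral which is an algebra map (with convolution inverse f^{-1} = f∘S). Then the quotient space A_B = A/[A,B], with the coaction induced from the original right H-coaction of A and the left H-action h·a = f(h(2)) a f^{-1}(h(1)), is a left-right anti Yetter–Drinfeld module over H. Moreover, if a(0) f^{-1}(a(1)(1)) f(a(1)(2)) = a holds for all a, then this anti Yetter–Drinfeld module is stable. -/

import Mathlib

open TensorProduct LinearMap

noncomputable section

variable {k H A M : Type*} [Field k] [Ring H] [HopfAlgebra k H]
  [Ring A] [Algebra k A] [AddCommGroup M] [Module k M]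

local notation "Δ" => (Coalgebra.comul (R := k) (A := H))
local notation "εH" => (Coalgebra.counit (R := k) (A := H))
local notation "𝒮" => (HopfAlgebra.antipode (R := k) (A := H))
local notation "mulH" => (LinearMap.mul' k H)
local notation "mulA" => (LinearMap.mul' k A)

/-- Right-hand side of the right-right (anti) Yetter-Drinfeld compatibility:
`m ⊗ h ↦ act (m₍₀₎ ⊗ h⑵) ⊗ s h⑴ * m₍₁₎ * h⑶`, where the comultiplication of `H` is `Dh`,
its multiplication is `mH` and `s` plays the role of the (inverse of the) antipode. -/
def ydRhs (mH : H ⊗[k] H →ₗ[k] H) (Dh : H →ₗ[k] H ⊗[k] H) (s : H →ₗ[k] H)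
    (act : M ⊗[k] H →ₗ[k] M) (ρM : M →ₗ[k] M ⊗[k] H) : M ⊗[k] H →ₗ[k] M ⊗[k] H :=
  lTensor M (mH ∘ₗ TensorProduct.map s mH) ∘ₗ
  (TensorProduct.assoc k M H (H ⊗[k] H)).toLinearMap ∘ₗ
  rTensor (H ⊗[k] H) (rTensor H act ∘ₗ (TensorProduct.assoc k M H H).symm.toLinearMap ∘ₗ
      lTensor M (TensorProduct.comm k H H).toLinearMap) ∘ₗ
  (tensorTensorTensorComm k M H (H ⊗[k] H) H).toLinearMap ∘ₗ
  TensorProduct.map ρM (rTensor H Dh ∘ₗ Dh)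

/-- Right-hand side of the left-right anti-Yetter-Drinfeld compatibility:
`h ⊗ m ↦ act (h⑵ ⊗ m₍₀₎) ⊗ h⑶ * m₍₁₎ * s h⑴`. -/
def aydLRRhs (mH : H ⊗[k] H →ₗ[k] H) (Dh : H →ₗ[k] H ⊗[k] H) (s : H →ₗ[k] H)
    (act : H ⊗[k] M →ₗ[k] M) (ρM : M →ₗ[k] M ⊗[k] H) : H ⊗[k] M →ₗ[k] M ⊗[k] H :=
  TensorProduct.map act
      (mH ∘ₗ lTensor H mH ∘ₗ lTensor H (lTensor H s) ∘ₗ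
        lTensor H (TensorProduct.comm k H H).toLinearMap ∘ₗ
        (TensorProduct.assoc k H H H).toLinearMap) ∘ₗ
  (tensorTensorTensorComm k H (H ⊗[k] H) M H).toLinearMap ∘ₗ
  TensorProduct.map
    ((TensorProduct.assoc k H H H).toLinearMap ∘ₗ
      (TensorProduct.comm k H (H ⊗[k] H)).toLinearMap ∘ₗ lTensor H Dh ∘ₗ Dh) ρM

/-- Right-hand side of the right-left anti-Yetter-Drinfeld compatibility:
`m ⊗ h ↦ s h⑶ * m₍₋₁₎ * h⑴ ⊗ act (m₍₀₎ ⊗ h⑵)`. -/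
def aydRLRhs (mH : H ⊗[k] H →ₗ[k] H) (Dh : H →ₗ[k] H ⊗[k] H) (s : H →ₗ[k] H)
    (act : M ⊗[k] H →ₗ[k] M) (lρ : M →ₗ[k] H ⊗[k] M) : M ⊗[k] H →ₗ[k] H ⊗[k] M :=
  rTensor M (mH ∘ₗ (TensorProduct.comm k H H).toLinearMap ∘ₗ lTensor H s) ∘ₗ
  (TensorProduct.assoc k H H M).symm.toLinearMap ∘ₗ
  lTensor H (TensorProduct.comm k M H).toLinearMap ∘ₗ
  TensorProduct.map mH (rTensor H act ∘ₗ (TensorProduct.assoc k M H H).symm.toLinearMap) ∘ₗ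
  (tensorTensorTensorComm k H M H (H ⊗[k] H)).toLinearMap ∘ₗ
  TensorProduct.map lρ (lTensor H Dh ∘ₗ Dh)

/-- `sandwich p q (a ⊗ (x ⊗ y)) = p x * a * q y`. -/
def sandwich (p q : H →ₗ[k] A) : A ⊗[k] (H ⊗[k] H) →ₗ[k] A :=
  mulA ∘ₗ TensorProduct.map (mulA ∘ₗ TensorProduct.map p LinearMap.id) q ∘ₗ
    rTensor H (TensorProduct.comm k A H).toLinearMap ∘ₗ
    (TensorProduct.assoc k A H H).symm.toLinearMap

/-- The right `H`-action `a · h = g h⑴ * a * f h⑵` attached to a total integral `f` with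
convolution inverse `g`. -/
def intAct (Dh : H →ₗ[k] H ⊗[k] H) (f g : H →ₗ[k] A) : A ⊗[k] H →ₗ[k] A :=
  sandwich g f ∘ₗ lTensor A Dh

/-- The left `H`-action `h · a = f h⑵ * a * g h⑴`. -/
def intActL (Dh : H →ₗ[k] H ⊗[k] H) (f g : H →ₗ[k] A) : H ⊗[k] A →ₗ[k] A :=
  sandwich f g ∘ₗ lTensor A ((TensorProduct.comm k H H).toLinearMap ∘ₗ Dh) ∘ₗ
    (TensorProduct.comm k H A).toLinearMap

/-- The set of coinvariants `B = {a | ρ a = a ⊗ 1}`. -/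
def coinv (ρA : A →ₗ[k] A ⊗[k] H) : Set A := {a : A | ρA a = a ⊗ₜ[k] (1 : H)}

/-- The canonical Galois map `A ⊗ A → A ⊗ H`, `a ⊗ a' ↦ a * a'₍₀₎ ⊗ a'₍₁₎`. -/
def canMap (ρA : A →ₗ[k] A ⊗[k] H) : A ⊗[k] A →ₗ[k] A ⊗[k] H :=
  rTensor H mulA ∘ₗ (TensorProduct.assoc k A A H).symm.toLinearMap ∘ₗ lTensor A ρA

/-- The kernel of `A ⊗ A → A ⊗_B A`: the span of the elements `(a*b) ⊗ a' - a ⊗ (b*a')`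
with `b` a coinvariant; so `A ⊗_B A = (A ⊗ A) ⧸ galRel ρA`. -/
def galRel (ρA : A →ₗ[k] A ⊗[k] H) : Submodule k (A ⊗[k] A) :=
  Submodule.span k {x : A ⊗[k] A |
    ∃ a a' b : A, b ∈ coinv ρA ∧ x = (a * b) ⊗ₜ[k] a' - a ⊗ₜ[k] (b * a')}

/-- The span of the commutators `[A, B]`, `B` the coinvariants; `A_B = A ⧸ commSub ρA`. -/
def commSub (ρA : A →ₗ[k] A ⊗[k] H) : Submodule k A :=
  Submodule.span k {x : A | ∃ a b : A, b ∈ coinv ρA ∧ x = a * b - b * a}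

/-- `δ(h⑴) • s h⑵`, the twisted antipode. -/
def twistS (δl : H →ₗ[k] k) (s : H →ₗ[k] H) (Dh : H →ₗ[k] H ⊗[k] H) : H →ₗ[k] H :=
  (TensorProduct.lid k H).toLinearMap ∘ₗ TensorProduct.map δl s ∘ₗ Dh

/-!
Write `h ▷ b = f h₍₁₎ * b * f (S h₍₂₎)` for the left adjoint action of `H` on `A` through `f`, and
`h · a = f h₍₂₎ * a * f (S h₍₁₎)` for the action in the theorem. Since `ρA ∘ f` is the convolution
product of `f ⊗ 1` and `1 ⊗ id`, whose values commute, conjugating by `ρA ∘ f` is conjugating by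
`f` in the factor `A` and by the identity in the factor `H`. For `·` this says that `A` itself is
an anti-Yetter–Drinfeld module; for `▷` it says that `B` is stable, and similarly
`a₍₀₎ * f (S a₍₁₎)` always lies in `B`.

The structure descends to `A_B` because `f h * b = (h₍₁₎ ▷ b) * f h₍₂₎` and
`b * f (S h) = f (S h₍₁₎) * (h₍₂₎ ▷ b)` move `h · (a * b)` to `h · (b * a)` by cycling only elements
of `B`. It is stable there because `a₍₁₎ · a₍₀₎ = f a₍₂₎ * (a₍₀₎ * f (S a₍₁₎))` is, modulo
`[A, B]`, equal to `a₍₀₎ * f (S a₍₁₎) * f a₍₂₎ = a`.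
-/

section Convolution

open WithConv

variable {R C V N X Y : Type*} [CommSemiring R] [AddCommMonoid C] [Module R C]
  [AddCommMonoid V] [Module R V] [AddCommMonoid N] [Module R N]
  [Semiring X] [Algebra R X] [Semiring Y] [Algebra R Y]

/-- The right action `v ↦ p v₍₀₎ * u v₍₁₎` of the convolution algebra of maps `C → X` on the maps
from a right `C`-comodule to `X`. -/
def convAlong (ρ : V →ₗ[R] V ⊗[R] C) (p : V →ₗ[R] X) (u : WithConv (C →ₗ[R] X)) : V →ₗ[R] X :=
  LinearMap.mul' R X ∘ₗ TensorProduct.map p u.ofConv ∘ₗ ρ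

theorem algHom_comp_convAlong (g : X →ₐ[R] Y) (ρ : V →ₗ[R] V ⊗[R] C) (p : V →ₗ[R] X)
    (u : WithConv (C →ₗ[R] X)) :
    g.toLinearMap ∘ₗ convAlong ρ p u =
      convAlong ρ (g.toLinearMap ∘ₗ p) (toConv (g.toLinearMap ∘ₗ u.ofConv)) := by
  simp only [convAlong, TensorProduct.map_comp, ← LinearMap.comp_assoc, AlgHom.comp_mul']

theorem convAlong_includeLeft_includeRight (ρ : V →ₗ[R] V ⊗[R] Y) (p : V →ₗ[R] X) :
    convAlong ρ ((Algebra.TensorProduct.includeLeft (R := R) (S := R) (B := Y)).toLinearMap ∘ₗ p)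
        (toConv (Algebra.TensorProduct.includeRight (R := R) (A := X)).toLinearMap) =
      rTensor Y p ∘ₗ ρ := by
  rw [convAlong, ← LinearMap.comp_assoc]
  congr 1
  ext
  simp

variable [Coalgebra R C]

/-- `ρ` makes `V` a right `C`-comodule. -/
structure IsRightCoaction (ρ : V →ₗ[R] V ⊗[R] C) : Prop where
  coassoc : (TensorProduct.assoc R V C C).toLinearMap ∘ₗ rTensor C ρ ∘ₗ ρ =
    lTensor V Coalgebra.comul ∘ₗ ρ
  counit : (TensorProduct.rid R V).toLinearMap ∘ₗ lTensor V Coalgebra.counit ∘ₗ ρ = LinearMap.id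

/-- The algebra `X` inside the convolution algebra of maps `C → X`: the map `c ↦ ε(c) x`. -/
def convConst (C : Type*) [AddCommMonoid C] [Module R C] [Coalgebra R C] (x : X) :
    WithConv (C →ₗ[R] X) :=
  toConv ((Coalgebra.counit (R := R) (A := C)).smulRight x)

theorem toConv_algHom_comp_mul (g : X →ₐ[R] Y) (u v : WithConv (C →ₗ[R] X)) :
    toConv (g.toLinearMap ∘ₗ (u * v).ofConv) =
      toConv (g.toLinearMap ∘ₗ u.ofConv) * toConv (g.toLinearMap ∘ₗ v.ofConv) :=
  congrArg toConv (algHom_comp_convMul_distrib g u v)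

theorem toConv_algHom_comp_convConst (g : X →ₐ[R] Y) (x : X) :
    toConv (g.toLinearMap ∘ₗ (convConst C x).ofConv) = convConst (R := R) C (g x) := by
  ext c
  simp [convConst]

theorem IsRightCoaction.of_surjective {W : Type*} [AddCommMonoid W] [Module R W]
    {ρ : V →ₗ[R] V ⊗[R] C} {ρ' : W →ₗ[R] W ⊗[R] C} {π : V →ₗ[R] W}
    (hπ : Function.Surjective π) (hρπ : ρ' ∘ₗ π = rTensor C π ∘ₗ ρ) (hρ : IsRightCoaction ρ) :
    IsRightCoaction ρ' where
  coassoc := by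
    rw [← LinearMap.cancel_right hπ]
    calc
      _ = (TensorProduct.assoc R W C C).toLinearMap ∘ₗ rTensor C (ρ' ∘ₗ π) ∘ₗ ρ := by
        rw [rTensor_comp, LinearMap.comp_assoc, LinearMap.comp_assoc, hρπ, LinearMap.comp_assoc]
      _ = rTensor (C ⊗[R] C) π ∘ₗ (TensorProduct.assoc R V C C).toLinearMap ∘ₗ
          rTensor C ρ ∘ₗ ρ := by
        rw [hρπ, rTensor_comp]
        simp only [← LinearMap.comp_assoc]
        congr 2
        ext
        simp
      _ = _ := by
        rw [hρ.coassoc, LinearMap.comp_assoc, hρπ]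
        simp only [← LinearMap.comp_assoc, rTensor_comp_lTensor, lTensor_comp_rTensor]
  counit := by
    rw [← LinearMap.cancel_right hπ]
    calc
      _ = (TensorProduct.rid R W).toLinearMap ∘ₗ lTensor W Coalgebra.counit ∘ₗ
          rTensor C π ∘ₗ ρ := by
        simp only [LinearMap.comp_assoc, hρπ]
      _ = π ∘ₗ (TensorProduct.rid R V).toLinearMap ∘ₗ lTensor V Coalgebra.counit ∘ₗ ρ := by
        simp only [← LinearMap.comp_assoc]
        congr 1
        ext
        simp
      _ = _ := by rw [hρ.counit, LinearMap.comp_id, LinearMap.id_comp]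

theorem isRightCoaction_comul :
    IsRightCoaction (Coalgebra.comul : C →ₗ[R] C ⊗[R] C) where
  coassoc := Coalgebra.coassoc
  counit := by ext; simp

theorem convConst_mul (x : X) (u : WithConv (C →ₗ[R] X)) :
    convConst C x * u = toConv (mulLeft R x ∘ₗ u.ofConv) := by
  ext c
  rw [(Coalgebra.Repr.arbitrary R c).convMul_apply]
  conv_rhs => rw [← Coalgebra.sum_counit_smul (Coalgebra.Repr.arbitrary R c)]
  simp [convConst]

theorem mul_convConst (x : X) (u : WithConv (C →ₗ[R] X)) :
    u * convConst C x = toConv (mulRight R x ∘ₗ u.ofConv) := by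
  have h : LinearMap.mul' R X ∘ₗ TensorProduct.map u.ofConv (convConst C x).ofConv =
      mulRight R x ∘ₗ u.ofConv ∘ₗ (TensorProduct.rid R C).toLinearMap ∘ₗ
        lTensor C Coalgebra.counit := by
    ext c d
    simp [convConst]
  rw [LinearMap.convMul_def, ← LinearMap.comp_assoc, h]
  simp only [LinearMap.comp_assoc, isRightCoaction_comul.counit, LinearMap.comp_id]

theorem convAlong_one {ρ : V →ₗ[R] V ⊗[R] C} (hρ : IsRightCoaction ρ) (p : V →ₗ[R] X) :
    convAlong ρ p 1 = p := by
  have h : LinearMap.mul' R X ∘ₗ TensorProduct.map p (1 : WithConv (C →ₗ[R] X)).ofConv =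
      p ∘ₗ (TensorProduct.rid R V).toLinearMap ∘ₗ lTensor V Coalgebra.counit := by
    ext v c
    simp [LinearMap.convOne_def, Algebra.smul_def, Algebra.commutes]
  rw [convAlong, ← LinearMap.comp_assoc, h, LinearMap.comp_assoc, LinearMap.comp_assoc, hρ.counit,
    LinearMap.comp_id]

/-- In Sweedler notation, `Ψ (p v₍₀₎ * u v₍₁₎) (w v₍₂₎) = Ψ (p v₍₀₎) (u v₍₁₎ * w v₍₂₎)`. -/
theorem lift_map_convAlong_of_balanced {ρ : V →ₗ[R] V ⊗[R] C} (hρ : IsRightCoaction ρ)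
    (Ψ : X →ₗ[R] X →ₗ[R] N) (p : V →ₗ[R] X) (u w : WithConv (C →ₗ[R] X))
    (hu : ∀ x y c, Ψ (x * u c) y = Ψ x (u c * y)) :
    TensorProduct.lift Ψ ∘ₗ TensorProduct.map (convAlong ρ p u) w.ofConv ∘ₗ ρ =
      TensorProduct.lift Ψ ∘ₗ TensorProduct.map p (u * w).ofConv ∘ₗ ρ := by
  have h : TensorProduct.lift Ψ ∘ₗ
        TensorProduct.map (LinearMap.mul' R X ∘ₗ TensorProduct.map p u.ofConv) w.ofConv =
      TensorProduct.lift Ψ ∘ₗ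
        TensorProduct.map p (LinearMap.mul' R X ∘ₗ TensorProduct.map u.ofConv w.ofConv) ∘ₗ
        (TensorProduct.assoc R V C C).toLinearMap := by
    ext v c d
    simp [hu]
  calc
    _ = (TensorProduct.lift Ψ ∘ₗ
          TensorProduct.map (LinearMap.mul' R X ∘ₗ TensorProduct.map p u.ofConv) w.ofConv) ∘ₗ
          rTensor C ρ ∘ₗ ρ := by
      simp only [convAlong, LinearMap.comp_assoc, ← map_comp_rTensor, rTensor_comp]
    _ = TensorProduct.lift Ψ ∘ₗ
          TensorProduct.map p (LinearMap.mul' R X ∘ₗ TensorProduct.map u.ofConv w.ofConv) ∘ₗ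
          lTensor V Coalgebra.comul ∘ₗ ρ := by
      rw [h, ← hρ.coassoc]; simp only [LinearMap.comp_assoc]
    _ = _ := by
      simp only [LinearMap.convMul_def, ← LinearMap.comp_assoc, map_comp_lTensor]

theorem convAlong_convAlong {ρ : V →ₗ[R] V ⊗[R] C} (hρ : IsRightCoaction ρ) (p : V →ₗ[R] X)
    (u w : WithConv (C →ₗ[R] X)) :
    convAlong ρ (convAlong ρ p u) w = convAlong ρ p (u * w) :=
  lift_map_convAlong_of_balanced hρ (LinearMap.mul R X) p u w fun _ _ _ => mul_assoc ..

end Convolution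

section Antipode

open WithConv HopfAlgebra

variable {R L X Y : Type*} [CommSemiring R] [Semiring L] [HopfAlgebra R L]
  [Semiring X] [Algebra R X] [Semiring Y] [Algebra R Y]

theorem toConv_comp_antipode_mul (F : L →ₐ[R] X) :
    toConv (F.toLinearMap ∘ₗ antipode R) * toConv F.toLinearMap = 1 := by
  have h := toConv_algHom_comp_mul F (toConv (antipode R (A := L))) (toConv LinearMap.id)
  rw [antipode_mul_id] at h
  refine h.symm.trans ?_
  ext
  simp [LinearMap.convOne_def]

theorem toConv_mul_comp_antipode (F : L →ₐ[R] X) :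
    toConv F.toLinearMap * toConv (F.toLinearMap ∘ₗ antipode R) = 1 := by
  have h := toConv_algHom_comp_mul F (toConv LinearMap.id) (toConv (antipode R (A := L)))
  rw [id_mul_antipode] at h
  refine h.symm.trans ?_
  ext
  simp [LinearMap.convOne_def]

theorem toConv_comp_antipode_of_eq_mul {F G K : L →ₐ[R] X}
    (hF : toConv F.toLinearMap = toConv G.toLinearMap * toConv K.toLinearMap) :
    toConv (F.toLinearMap ∘ₗ antipode R) =
      toConv (K.toLinearMap ∘ₗ antipode R) * toConv (G.toLinearMap ∘ₗ antipode R) := by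
  refine left_inv_eq_right_inv (toConv_comp_antipode_mul F) ?_
  rw [hF, mul_assoc, ← mul_assoc (toConv K.toLinearMap), toConv_mul_comp_antipode, one_mul,
    toConv_mul_comp_antipode]

/-- The algebra map `h ↦ (x ↦ F h₍₂₎ * x * F (S h₍₁₎))`, as the composite
`L → L ⊗ L → L ⊗ Lᵒᵖ → X ⊗ Xᵒᵖ → End X`. -/
def twistedAdjoint (F : L →ₐ[R] X) : L →ₐ[R] Module.End R X :=
  (AlgHom.mulLeftRight R X).comp <|
    (Algebra.TensorProduct.map F ((AlgHom.op F).comp (antipodeAlgHomOp R L))).comp <|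
      (Algebra.TensorProduct.comm R L L).toAlgHom.comp (Bialgebra.comulAlgHom R L)

theorem toConv_twistedAdjoint (F : L →ₐ[R] X) :
    toConv (twistedAdjoint F).toLinearMap =
      toConv ((LinearMap.mul R X).flip ∘ₗ F.toLinearMap ∘ₗ antipode R) *
        toConv (LinearMap.mul R X ∘ₗ F.toLinearMap) := by
  ext h x
  rw [(Coalgebra.Repr.arbitrary R h).convMul_apply]
  simp [twistedAdjoint, ← (Coalgebra.Repr.arbitrary R h).eq]

theorem twistedAdjoint_apply (F : L →ₐ[R] X) (h : L) (x : X) :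
    twistedAdjoint F h x = TensorProduct.lift ((LinearMap.mul R X).flip ∘ₗ mulLeft R x)
      (TensorProduct.map (F.toLinearMap ∘ₗ antipode R) F.toLinearMap (Coalgebra.comul h)) := by
  simp [twistedAdjoint, ← (Coalgebra.Repr.arbitrary R h).eq, mul_assoc]

theorem algHom_twistedAdjoint (g : X →ₐ[R] Y) (F : L →ₐ[R] X) (h : L) (x : X) :
    g (twistedAdjoint F h x) = twistedAdjoint (g.comp F) h (g x) := by
  simp [twistedAdjoint, ← (Coalgebra.Repr.arbitrary R h).eq]

theorem twistedAdjoint_includeLeft_comp (F : L →ₐ[R] X) (h : L) (x : X) (y : Y) :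
    twistedAdjoint (Algebra.TensorProduct.includeLeft.comp F) h (x ⊗ₜ[R] y) =
      twistedAdjoint F h x ⊗ₜ y := by
  simp [twistedAdjoint_apply, ← (Coalgebra.Repr.arbitrary R h).eq, TensorProduct.sum_tmul]

theorem toConv_twistedAdjoint_of_eq_mul {F G K : L →ₐ[R] X}
    (hF : toConv F.toLinearMap = toConv G.toLinearMap * toConv K.toLinearMap)
    (hGK : ∀ g h, Commute (G g) (K h)) :
    toConv (twistedAdjoint F).toLinearMap =
      toConv ((LinearMap.mul R X).flip ∘ₗ K.toLinearMap ∘ₗ antipode R) *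
        toConv (twistedAdjoint G).toLinearMap * toConv (LinearMap.mul R X ∘ₗ K.toLinearMap) := by
  have hleft : toConv (LinearMap.mul R X ∘ₗ F.toLinearMap) =
      toConv (LinearMap.mul R X ∘ₗ G.toLinearMap) *
        toConv (LinearMap.mul R X ∘ₗ K.toLinearMap) := by
    rw [← ofConv_toConv F.toLinearMap, hF]
    exact toConv_algHom_comp_mul (Algebra.lmul R X) _ _
  have hright : toConv ((LinearMap.mul R X).flip ∘ₗ F.toLinearMap ∘ₗ antipode R) =
      toConv ((LinearMap.mul R X).flip ∘ₗ K.toLinearMap ∘ₗ antipode R) *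
        toConv ((LinearMap.mul R X).flip ∘ₗ G.toLinearMap ∘ₗ antipode R) := by
    rw [← ofConv_toConv (F.toLinearMap ∘ₗ antipode R), toConv_comp_antipode_of_eq_mul hF]
    ext h x
    simp [← (Coalgebra.Repr.arbitrary R h).eq, mul_assoc, (hGK _ _).eq]
  simp only [toConv_twistedAdjoint, hleft, hright, mul_assoc]

/-- The left adjoint action `h ↦ F h₍₁₎ * x * F (S h₍₂₎)`. -/
def adjointConv (F : L →ₐ[R] X) (x : X) : WithConv (L →ₗ[R] X) :=
  toConv F.toLinearMap * convConst L x * toConv (F.toLinearMap ∘ₗ antipode R)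

theorem toConv_comp_antipode_mul_adjointConv (F : L →ₐ[R] X) (x : X) :
    toConv (F.toLinearMap ∘ₗ antipode R) * adjointConv F x =
      toConv (mulLeft R x ∘ₗ F.toLinearMap ∘ₗ antipode R) := by
  rw [adjointConv, ← mul_assoc, ← mul_assoc, toConv_comp_antipode_mul, one_mul, convConst_mul]

theorem adjointConv_mul_toConv (F : L →ₐ[R] X) (x : X) :
    adjointConv F x * toConv F.toLinearMap = toConv (mulRight R x ∘ₗ F.toLinearMap) := by
  rw [adjointConv, mul_assoc, toConv_comp_antipode_mul, mul_one, mul_convConst]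

theorem toConv_algHom_comp_adjointConv (g : X →ₐ[R] Y) (F : L →ₐ[R] X) (x : X) :
    toConv (g.toLinearMap ∘ₗ (adjointConv F x).ofConv) = adjointConv (g.comp F) (g x) := by
  simp only [adjointConv, toConv_algHom_comp_mul, toConv_algHom_comp_convConst]
  rfl

theorem adjointConv_of_eq_mul {F G K : L →ₐ[R] X} {x : X}
    (hF : toConv F.toLinearMap = toConv G.toLinearMap * toConv K.toLinearMap)
    (hx : ∀ h, Commute x (K h)) : adjointConv F x = adjointConv G x := by
  have hK : toConv K.toLinearMap * convConst L x = convConst L x * toConv K.toLinearMap := by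
    rw [mul_convConst, convConst_mul]
    ext h
    exact (hx h).eq.symm
  calc
    adjointConv F x = toConv G.toLinearMap * (toConv K.toLinearMap * convConst L x) *
        (toConv (K.toLinearMap ∘ₗ antipode R) * toConv (G.toLinearMap ∘ₗ antipode R)) := by
      rw [adjointConv, hF, toConv_comp_antipode_of_eq_mul hF, mul_assoc (toConv G.toLinearMap)]
    _ = toConv G.toLinearMap * convConst L x *
        (toConv K.toLinearMap * toConv (K.toLinearMap ∘ₗ antipode R)) *
        toConv (G.toLinearMap ∘ₗ antipode R) := by
      rw [hK]
      simp only [mul_assoc]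
    _ = adjointConv G x := by rw [toConv_mul_comp_antipode, mul_one, adjointConv]

/-- Write `h ▷ b` for the left adjoint action. Since `b * F (S h) = F (S h₍₁₎) * (h₍₂₎ ▷ b)` and
`F h * b = (h₍₁₎ ▷ b) * F h₍₂₎`, only the elements `h ▷ b` need to be cycled around under `π`. -/
theorem map_twistedAdjoint_mul_comm {N : Type*} [AddCommMonoid N] [Module R N] (F : L →ₐ[R] X)
    (π : X →ₗ[R] N) {b : X}
    (hb : ∀ h x, π (x * adjointConv F b h) = π (adjointConv F b h * x)) (h : L) (a : X) :
    π (twistedAdjoint F h (a * b)) = π (twistedAdjoint F h (b * a)) := by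
  let Ψ : X →ₗ[R] X →ₗ[R] N := ((LinearMap.mul R X).flip ∘ₗ mulLeft R a).compr₂ π
  have hcycle := lift_map_convAlong_of_balanced isRightCoaction_comul Ψ
    (F.toLinearMap ∘ₗ antipode R) (adjointConv F b) (toConv F.toLinearMap) fun x y c => by
      simpa [Ψ, mul_assoc] using hb c (y * (a * x))
  have hleft : convAlong Coalgebra.comul (F.toLinearMap ∘ₗ antipode R) (adjointConv F b) =
      mulLeft R b ∘ₗ F.toLinearMap ∘ₗ antipode R :=
    congrArg ofConv (toConv_comp_antipode_mul_adjointConv F b)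
  rw [hleft, adjointConv_mul_toConv] at hcycle
  have hcycle := LinearMap.congr_fun hcycle h
  simpa [Ψ, twistedAdjoint_apply, ← (Coalgebra.Repr.arbitrary R h).eq, mul_assoc] using hcycle

end Antipode

section AntiYetterDrinfeld

open WithConv

variable {P : Type*} [AddCommGroup P] [Module k P]

/-- `M` with the action `act` and the coaction `ρM` is a left-right anti-Yetter–Drinfeld module
over `H`. -/
structure IsAntiYetterDrinfeld (act : H ⊗[k] M →ₗ[k] M) (ρM : M →ₗ[k] M ⊗[k] H) : Prop
    extends IsRightCoaction ρM where
  mul_act : act ∘ₗ rTensor M mulH =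
    act ∘ₗ lTensor H act ∘ₗ (TensorProduct.assoc k H H M).toLinearMap
  one_act : ∀ m, act ((1 : H) ⊗ₜ[k] m) = m
  compat : ρM ∘ₗ act = aydLRRhs mulH Δ 𝒮 act ρM

theorem aydLRRhs_comp_lTensor {mH : H ⊗[k] H →ₗ[k] H} {Dh : H →ₗ[k] H ⊗[k] H} {s : H →ₗ[k] H}
    {actM : H ⊗[k] M →ₗ[k] M} {ρM : M →ₗ[k] M ⊗[k] H}
    {actP : H ⊗[k] P →ₗ[k] P} {ρP : P →ₗ[k] P ⊗[k] H} {π : M →ₗ[k] P}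
    (hact : actP ∘ₗ lTensor H π = π ∘ₗ actM) (hρ : ρP ∘ₗ π = rTensor H π ∘ₗ ρM) :
    aydLRRhs mH Dh s actP ρP ∘ₗ lTensor H π = rTensor H π ∘ₗ aydLRRhs mH Dh s actM ρM := by
  have hcomm : (tensorTensorTensorComm k H (H ⊗[k] H) P H).toLinearMap ∘ₗ
        lTensor (H ⊗[k] (H ⊗[k] H)) (rTensor H π) =
      rTensor ((H ⊗[k] H) ⊗[k] H) (lTensor H π) ∘ₗ
        (tensorTensorTensorComm k H (H ⊗[k] H) M H).toLinearMap := by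
    ext
    simp
  have hcoaction (d) : TensorProduct.map d ρP ∘ₗ lTensor H π =
      lTensor (H ⊗[k] (H ⊗[k] H)) (rTensor H π) ∘ₗ TensorProduct.map d ρM := by
    rw [map_comp_lTensor, hρ, lTensor_comp_map]
  have haction (t) : TensorProduct.map actP t ∘ₗ rTensor ((H ⊗[k] H) ⊗[k] H) (lTensor H π) =
      rTensor H π ∘ₗ TensorProduct.map actM t := by
    rw [map_comp_rTensor, hact, rTensor_comp_map]
  rw [aydLRRhs, aydLRRhs, LinearMap.comp_assoc, LinearMap.comp_assoc, hcoaction,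
    ← LinearMap.comp_assoc _ (lTensor _ (rTensor _ _)), hcomm, LinearMap.comp_assoc,
    ← LinearMap.comp_assoc _ (rTensor _ (lTensor _ _)), haction, LinearMap.comp_assoc]

/-- The three convolution factors are `R_{S h⑴}` on `H`, the action of `h⑵` on `M`, and `L_{h⑶}`
on `H`. -/
theorem aydLRRhs_tmul (act : H ⊗[k] M →ₗ[k] M) (ρM : M →ₗ[k] M ⊗[k] H) (h : H) (m : M) :
    aydLRRhs mulH Δ 𝒮 act ρM (h ⊗ₜ m) =
      (toConv (lTensorHom M ∘ₗ (LinearMap.mul k H).flip ∘ₗ 𝒮) *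
        (toConv (rTensorHom H ∘ₗ TensorProduct.curry act) *
          toConv (lTensorHom M ∘ₗ LinearMap.mul k H)) : WithConv (H →ₗ[k] Module.End k (M ⊗[k] H)))
        h (ρM m) := by
  simp only [aydLRRhs, LinearMap.comp_apply, TensorProduct.map_tmul]
  rw [← (Coalgebra.Repr.arbitrary k h).eq]
  induction ρM m with
  | zero => simp
  | add x y hx hy => simp only [map_add, TensorProduct.tmul_add, hx, hy]
  | tmul x g =>
    rw [(Coalgebra.Repr.arbitrary k h).convMul_apply]
    simp only [map_sum, lTensor_tmul, LinearEquiv.coe_coe, comm_tmul, sum_tmul, coe_comp,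
      coe_lTensorHom, Function.comp_apply, convMul_apply, coe_sum, Finset.sum_apply,
      Module.End.mul_apply]
    refine Finset.sum_congr rfl fun i _ => ?_
    rw [← (Coalgebra.Repr.arbitrary k _).eq]
    simp [TensorProduct.sum_tmul, mul_assoc]

theorem IsAntiYetterDrinfeld.of_surjective {actM : H ⊗[k] M →ₗ[k] M} {ρM : M →ₗ[k] M ⊗[k] H}
    {actP : H ⊗[k] P →ₗ[k] P} {ρP : P →ₗ[k] P ⊗[k] H} {π : M →ₗ[k] P}
    (hπ : Function.Surjective π) (hact : actP ∘ₗ lTensor H π = π ∘ₗ actM)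
    (hρ : ρP ∘ₗ π = rTensor H π ∘ₗ ρM) (hM : IsAntiYetterDrinfeld actM ρM) :
    IsAntiYetterDrinfeld actP ρP := by
  have hact' (h : H) (m : M) : actP (h ⊗ₜ π m) = π (actM (h ⊗ₜ m)) :=
    LinearMap.congr_fun hact (h ⊗ₜ m)
  refine ⟨hM.toIsRightCoaction.of_surjective hπ hρ, ?_, hπ.forall.2 fun m => ?_, ?_⟩
  · rw [← LinearMap.cancel_right (lTensor_surjective _ hπ)]
    ext g h m
    have hmul := LinearMap.congr_fun hM.mul_act ((g ⊗ₜ h) ⊗ₜ m)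
    simpa [hact'] using congrArg π hmul
  · rw [hact', hM.one_act]
  · rw [← LinearMap.cancel_right (lTensor_surjective _ hπ), aydLRRhs_comp_lTensor hact hρ,
      LinearMap.comp_assoc, hact, ← LinearMap.comp_assoc, hρ, LinearMap.comp_assoc, hM.compat]

theorem IsAntiYetterDrinfeld.exists_quotient {act : H ⊗[k] M →ₗ[k] M} {ρM : M →ₗ[k] M ⊗[k] H}
    (hM : IsAntiYetterDrinfeld act ρM) {C : Submodule k M}
    (hact : ∀ h, ∀ c ∈ C, act (h ⊗ₜ c) ∈ C) (hρ : ∀ c ∈ C, rTensor H C.mkQ (ρM c) = 0) :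
    ∃ (actQ : H ⊗[k] (M ⧸ C) →ₗ[k] M ⧸ C) (ρQ : M ⧸ C →ₗ[k] (M ⧸ C) ⊗[k] H),
      actQ ∘ₗ lTensor H C.mkQ = C.mkQ ∘ₗ act ∧ ρQ ∘ₗ C.mkQ = rTensor H C.mkQ ∘ₗ ρM ∧
        IsAntiYetterDrinfeld actQ ρQ := by
  let act' : M →ₗ[k] H →ₗ[k] M ⧸ C := ((TensorProduct.curry act).compr₂ C.mkQ).flip
  have hact' : C ≤ ker act' := fun c hc => by
    ext h
    exact (Submodule.Quotient.mk_eq_zero C).2 (hact h c hc)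
  let actQ : H ⊗[k] (M ⧸ C) →ₗ[k] M ⧸ C := TensorProduct.lift (C.liftQ act' hact').flip
  let ρQ : M ⧸ C →ₗ[k] (M ⧸ C) ⊗[k] H := C.liftQ (rTensor H C.mkQ ∘ₗ ρM) hρ
  have hactQ : actQ ∘ₗ lTensor H C.mkQ = C.mkQ ∘ₗ act := TensorProduct.ext' fun _ _ => rfl
  have hρQ : ρQ ∘ₗ C.mkQ = rTensor H C.mkQ ∘ₗ ρM := C.liftQ_mkQ _ _
  exact ⟨actQ, ρQ, hactQ, hρQ, hM.of_surjective C.mkQ_surjective hactQ hρQ⟩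

end AntiYetterDrinfeld

section TotalIntegral

open WithConv Algebra.TensorProduct

variable {f : H →ₐ[k] A} {ρA : A →ₐ[k] A ⊗[k] H}

theorem intActL_tmul (f : H →ₐ[k] A) (h : H) (a : A) :
    intActL Δ f.toLinearMap (f.toLinearMap ∘ₗ 𝒮) (h ⊗ₜ a) = twistedAdjoint f h a := by
  simp [intActL, sandwich, twistedAdjoint_apply, ← (Coalgebra.Repr.arbitrary k h).eq,
    TensorProduct.tmul_sum, mul_assoc]

theorem toConv_coaction_comp (hf : ρA.toLinearMap ∘ₗ f.toLinearMap = rTensor H f.toLinearMap ∘ₗ Δ) :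
    toConv (ρA.comp f).toLinearMap =
      toConv (includeLeft.comp f).toLinearMap * toConv includeRight.toLinearMap := by
  ext h
  refine (LinearMap.congr_fun hf h).trans ?_
  rw [← convAlong_includeLeft_includeRight]
  rfl

theorem coaction_twistedAdjoint
    (hf : ρA.toLinearMap ∘ₗ f.toLinearMap = rTensor H f.toLinearMap ∘ₗ Δ) (h : H) (a : A) :
    ρA (twistedAdjoint f h a) = aydLRRhs mulH Δ 𝒮
      (intActL Δ f.toLinearMap (f.toLinearMap ∘ₗ 𝒮)) ρA.toLinearMap (h ⊗ₜ a) := by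
  have htriple := toConv_twistedAdjoint_of_eq_mul (toConv_coaction_comp hf) fun g h => by
    simp [commute_iff_eq]
  rw [mul_assoc] at htriple
  have hact : toConv (rTensorHom H ∘ₗ
      TensorProduct.curry (intActL Δ f.toLinearMap (f.toLinearMap ∘ₗ 𝒮))) =
        toConv (twistedAdjoint (includeLeft.comp f)).toLinearMap := by
    ext h a g
    simp [intActL_tmul, twistedAdjoint_includeLeft_comp]
  have hleft : toConv (lTensorHom A ∘ₗ LinearMap.mul k H) =
      toConv (LinearMap.mul k (A ⊗[k] H) ∘ₗ includeRight.toLinearMap) := by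
    ext h a g
    simp
  have hright : toConv (lTensorHom A ∘ₗ (LinearMap.mul k H).flip ∘ₗ 𝒮) =
      toConv ((LinearMap.mul k (A ⊗[k] H)).flip ∘ₗ includeRight.toLinearMap ∘ₗ 𝒮) := by
    ext h a g
    simp
  rw [aydLRRhs_tmul, hact, hleft, hright, ← htriple, algHom_twistedAdjoint]
  rfl

theorem isAntiYetterDrinfeld_intActL (hρ : IsRightCoaction ρA.toLinearMap)
    (hf : ρA.toLinearMap ∘ₗ f.toLinearMap = rTensor H f.toLinearMap ∘ₗ Δ) :
    IsAntiYetterDrinfeld (intActL Δ f.toLinearMap (f.toLinearMap ∘ₗ 𝒮)) ρA.toLinearMap where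
  toIsRightCoaction := hρ
  mul_act := by
    ext g h a
    simp [intActL_tmul]
  one_act a := by simp [intActL_tmul]
  compat := TensorProduct.ext' fun h a => by
    simp only [LinearMap.comp_apply, intActL_tmul, AlgHom.toLinearMap_apply,
      coaction_twistedAdjoint hf]

theorem mkQ_commSub_mul_comm (ρ : A →ₗ[k] A ⊗[k] H) (a : A) {b : A} (hb : b ∈ coinv ρ) :
    (commSub ρ).mkQ (a * b) = (commSub ρ).mkQ (b * a) :=
  (Submodule.Quotient.eq _).2 (Submodule.subset_span ⟨a, b, hb, rfl⟩)

theorem adjointConv_mem_coinv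
    (hf : ρA.toLinearMap ∘ₗ f.toLinearMap = rTensor H f.toLinearMap ∘ₗ Δ) {b : A}
    (hb : b ∈ coinv ρA.toLinearMap) (h : H) : adjointConv f b h ∈ coinv ρA.toLinearMap := by
  have hρb : ρA b = includeLeft (S := k) b := hb
  have hcoinv := calc
    toConv (ρA.toLinearMap ∘ₗ (adjointConv f b).ofConv)
        = adjointConv (ρA.comp f) (includeLeft (S := k) b) := by
      rw [toConv_algHom_comp_adjointConv, hρb]
    _ = adjointConv (includeLeft.comp f) (includeLeft (S := k) b) :=
      adjointConv_of_eq_mul (toConv_coaction_comp hf) fun g => by simp [commute_iff_eq]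
    _ = toConv (includeLeft.toLinearMap ∘ₗ (adjointConv f b).ofConv) :=
      (toConv_algHom_comp_adjointConv _ f b).symm
  exact LinearMap.congr_fun (congrArg ofConv hcoinv) h

theorem twistedAdjoint_mem_commSub
    (hf : ρA.toLinearMap ∘ₗ f.toLinearMap = rTensor H f.toLinearMap ∘ₗ Δ) (h : H) {c : A}
    (hc : c ∈ commSub ρA.toLinearMap) : twistedAdjoint f h c ∈ commSub ρA.toLinearMap := by
  induction hc using Submodule.span_induction with
  | mem _ hx =>
    obtain ⟨a, b, hb, rfl⟩ := hx
    rw [map_sub]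
    exact (Submodule.Quotient.eq _).1 <| map_twistedAdjoint_mul_comm f _
      (fun g x => mkQ_commSub_mul_comm _ x (adjointConv_mem_coinv hf hb g)) h a
  | zero => simp
  | add x y _ _ hx hy => simpa using add_mem hx hy
  | smul r x _ hx => simpa using Submodule.smul_mem _ r hx

theorem rTensor_mkQ_coaction_eq_zero {c : A} (hc : c ∈ commSub ρA.toLinearMap) :
    rTensor H (commSub ρA.toLinearMap).mkQ (ρA c) = 0 := by
  refine Submodule.span_le (p := ker (rTensor H (commSub ρA.toLinearMap).mkQ ∘ₗ ρA.toLinearMap)).2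
    ?_ hc
  rintro _ ⟨a, b, hb, rfl⟩
  have hρb : ρA b = b ⊗ₜ 1 := hb
  simp only [SetLike.mem_coe, LinearMap.mem_ker, LinearMap.comp_apply, AlgHom.toLinearMap_apply,
    map_sub, map_mul, hρb, sub_eq_zero]
  induction ρA a with
  | zero => simp
  | add x y hx hy => simp only [map_add, add_mul, mul_add, hx, hy]
  | tmul x h =>
    simp only [tmul_mul_tmul, rTensor_tmul, mul_one, one_mul, mkQ_commSub_mul_comm _ x hb]

theorem convAlong_comp_antipode_mem_coinv (hρ : IsRightCoaction ρA.toLinearMap)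
    (hf : ρA.toLinearMap ∘ₗ f.toLinearMap = rTensor H f.toLinearMap ∘ₗ Δ) (a : A) :
    convAlong ρA.toLinearMap LinearMap.id (toConv (f.toLinearMap ∘ₗ 𝒮)) a ∈
      coinv ρA.toLinearMap := by
  have hρA : ρA.toLinearMap = convAlong ρA.toLinearMap
      (includeLeft (R := k) (S := k)).toLinearMap (toConv includeRight.toLinearMap) := by
    simpa using (convAlong_includeLeft_includeRight ρA.toLinearMap LinearMap.id).symm
  have hcoinv := calc
    ρA.toLinearMap ∘ₗ convAlong ρA.toLinearMap LinearMap.id (toConv (f.toLinearMap ∘ₗ 𝒮))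
        = convAlong ρA.toLinearMap ρA.toLinearMap
            (toConv ((ρA.comp f).toLinearMap ∘ₗ 𝒮)) := algHom_comp_convAlong ..
    _ = convAlong ρA.toLinearMap (includeLeft (R := k) (S := k)).toLinearMap
            (toConv ((includeLeft.comp f).toLinearMap ∘ₗ 𝒮)) := by
      conv_lhs => enter [2]; rw [hρA]
      rw [convAlong_convAlong hρ, toConv_comp_antipode_of_eq_mul (toConv_coaction_comp hf),
        ← mul_assoc, toConv_mul_comp_antipode, one_mul]
    _ = includeLeft.toLinearMap ∘ₗ convAlong ρA.toLinearMap LinearMap.id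
            (toConv (f.toLinearMap ∘ₗ 𝒮)) := by
      rw [algHom_comp_convAlong, LinearMap.comp_id]
      rfl
  exact LinearMap.congr_fun hcoinv a

/-- Coassociativity in the form `a₍₁₎ · a₍₀₎ = f a₍₂₎ * (a₍₀₎ * f (S a₍₁₎))`. -/
theorem intActL_comp_comm_comp_coaction {ρ : A →ₗ[k] A ⊗[k] H} (hρ : IsRightCoaction ρ)
    (f : H →ₐ[k] A) :
    intActL Δ f.toLinearMap (f.toLinearMap ∘ₗ 𝒮) ∘ₗ (TensorProduct.comm k A H).toLinearMap ∘ₗ ρ =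
      TensorProduct.lift (LinearMap.mul k A).flip ∘ₗ TensorProduct.map
        (convAlong ρ LinearMap.id (toConv (f.toLinearMap ∘ₗ 𝒮))) f.toLinearMap ∘ₗ ρ := by
  let ψ : A ⊗[k] (H ⊗[k] H) →ₗ[k] A :=
    sandwich f.toLinearMap (f.toLinearMap ∘ₗ 𝒮) ∘ₗ
      lTensor A (TensorProduct.comm k H H).toLinearMap
  have hact : intActL Δ f.toLinearMap (f.toLinearMap ∘ₗ 𝒮) ∘ₗ
      (TensorProduct.comm k A H).toLinearMap = ψ ∘ₗ lTensor A Δ := by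
    ext a h
    simp [intActL, ψ]
  have hψ : ψ ∘ₗ (TensorProduct.assoc k A H H).toLinearMap =
      TensorProduct.lift (LinearMap.mul k A).flip ∘ₗ
        TensorProduct.map (LinearMap.mul' k A ∘ₗ TensorProduct.map LinearMap.id
          (f.toLinearMap ∘ₗ 𝒮)) f.toLinearMap := by
    ext a g h
    simp [ψ, sandwich, mul_assoc]
  rw [← LinearMap.comp_assoc, hact, LinearMap.comp_assoc, ← hρ.coassoc, ← LinearMap.comp_assoc, hψ,
    LinearMap.comp_assoc, ← LinearMap.comp_assoc _ (rTensor H ρ), map_comp_rTensor]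
  rfl

theorem mkQ_comp_intActL_comp_comm_comp_coaction (hρ : IsRightCoaction ρA.toLinearMap)
    (hf : ρA.toLinearMap ∘ₗ f.toLinearMap = rTensor H f.toLinearMap ∘ₗ Δ) :
    (commSub ρA.toLinearMap).mkQ ∘ₗ intActL Δ f.toLinearMap (f.toLinearMap ∘ₗ 𝒮) ∘ₗ
      (TensorProduct.comm k A H).toLinearMap ∘ₗ ρA.toLinearMap = (commSub ρA.toLinearMap).mkQ := by
  let T : A →ₗ[k] A := convAlong ρA.toLinearMap LinearMap.id (toConv (f.toLinearMap ∘ₗ 𝒮))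
  have hswap : (commSub ρA.toLinearMap).mkQ ∘ₗ TensorProduct.lift (LinearMap.mul k A).flip ∘ₗ
        TensorProduct.map T f.toLinearMap =
      (commSub ρA.toLinearMap).mkQ ∘ₗ LinearMap.mul' k A ∘ₗ TensorProduct.map T f.toLinearMap :=
    TensorProduct.ext' fun a h =>
      mkQ_commSub_mul_comm _ (f h) (convAlong_comp_antipode_mem_coinv hρ hf a)
  calc
    _ = ((commSub ρA.toLinearMap).mkQ ∘ₗ TensorProduct.lift (LinearMap.mul k A).flip ∘ₗ
        TensorProduct.map T f.toLinearMap) ∘ₗ ρA.toLinearMap := by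
      rw [intActL_comp_comm_comp_coaction hρ]
      simp only [LinearMap.comp_assoc, T]
    _ = (commSub ρA.toLinearMap).mkQ ∘ₗ
        convAlong ρA.toLinearMap T (toConv f.toLinearMap) := by
      rw [hswap]
      rfl
    _ = (commSub ρA.toLinearMap).mkQ := by
      rw [convAlong_convAlong hρ, toConv_comp_antipode_mul, convAlong_one hρ, LinearMap.comp_id]

end TotalIntegral

theorem total_integral_algebra_map_gives_AYD_on_quotient_general
    {ρA : A →ₐ[k] A ⊗[k] H} (hρ : IsRightCoaction ρA.toLinearMap) {f : H →ₐ[k] A}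
    (hf : ρA.toLinearMap ∘ₗ f.toLinearMap = rTensor H f.toLinearMap ∘ₗ Δ) :
    ∃ (actQ : H ⊗[k] (A ⧸ commSub ρA.toLinearMap) →ₗ[k] A ⧸ commSub ρA.toLinearMap)
      (ρQ : A ⧸ commSub ρA.toLinearMap →ₗ[k] (A ⧸ commSub ρA.toLinearMap) ⊗[k] H),
      actQ ∘ₗ lTensor H (commSub ρA.toLinearMap).mkQ =
          (commSub ρA.toLinearMap).mkQ ∘ₗ intActL Δ f.toLinearMap (f.toLinearMap ∘ₗ 𝒮) ∧
        ρQ ∘ₗ (commSub ρA.toLinearMap).mkQ =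
          rTensor H (commSub ρA.toLinearMap).mkQ ∘ₗ ρA.toLinearMap ∧
        IsAntiYetterDrinfeld actQ ρQ ∧
        actQ ∘ₗ (TensorProduct.comm k (A ⧸ commSub ρA.toLinearMap) H).toLinearMap ∘ₗ ρQ =
          LinearMap.id := by
  obtain ⟨actQ, ρQ, hact, hcoact, hayd⟩ :=
    (isAntiYetterDrinfeld_intActL hρ hf).exists_quotient
      (fun h c hc => (intActL_tmul f h c).symm ▸ twistedAdjoint_mem_commSub hf h hc)
      (fun _ => rTensor_mkQ_coaction_eq_zero)
  refine ⟨actQ, ρQ, hact, hcoact, hayd, ?_⟩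
  rw [← LinearMap.cancel_right (commSub ρA.toLinearMap).mkQ_surjective, LinearMap.id_comp]
  calc
    _ = (actQ ∘ₗ lTensor H (commSub ρA.toLinearMap).mkQ) ∘ₗ
          (TensorProduct.comm k A H).toLinearMap ∘ₗ ρA.toLinearMap := by
      rw [LinearMap.comp_assoc, LinearMap.comp_assoc, hcoact, LinearMap.comp_assoc,
        ← LinearMap.comp_assoc _ _ (lTensor _ _), lTensor_comp_comm, LinearMap.comp_assoc]
    _ = (commSub ρA.toLinearMap).mkQ := by
      rw [hact, LinearMap.comp_assoc, mkQ_comp_intActL_comp_comm_comp_coaction hρ hf]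

/-- For a total integral `f : H → A` which is an algebra map (with convolution
inverse `f ∘ 𝒮`), the quotient `A_B = A ⧸ [A,B]` with the induced coaction and the left action
`h · a = f h⑵ * a * f⁻¹ h⑴` is a left-right anti-Yetter-Drinfeld module over `H`; moreover if
`a₍₀₎ * f⁻¹ (a₍₁₎⑴) * f (a₍₁₎⑵) = a` for all `a` then this module is stable. -/
theorem total_integral_algebra_map_gives_AYD_on_quotient
    (Sinv : H →ₗ[k] H) (hS₁ : Sinv ∘ₗ 𝒮 = LinearMap.id) (hS₂ : 𝒮 ∘ₗ Sinv = LinearMap.id)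
    (ρA : A →ₗ[k] A ⊗[k] H)
    (hρ_coassoc : (TensorProduct.assoc k A H H).toLinearMap ∘ₗ rTensor H ρA ∘ₗ ρA =
      lTensor A Δ ∘ₗ ρA)
    (hρ_counit : (TensorProduct.rid k A).toLinearMap ∘ₗ lTensor A εH ∘ₗ ρA = LinearMap.id)
    (hρ_one : ρA 1 = (1 : A) ⊗ₜ[k] (1 : H))
    (hρ_mul : ∀ x y : A, ρA (x * y) = ρA x * ρA y)
    (f : H →ₗ[k] A) (hf_one : f 1 = 1)
    (hf_comod : ρA ∘ₗ f = rTensor H f ∘ₗ Δ)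
    (hf_mul : ∀ x y : H, f (x * y) = f x * f y)
 :
    ∃ actQ : H ⊗[k] (A ⧸ commSub ρA) →ₗ[k] (A ⧸ commSub ρA),
    ∃ ρQ : (A ⧸ commSub ρA) →ₗ[k] (A ⧸ commSub ρA) ⊗[k] H,
      (actQ ∘ₗ lTensor H (commSub ρA).mkQ = (commSub ρA).mkQ ∘ₗ intActL Δ f (f ∘ₗ 𝒮)) ∧
      (ρQ ∘ₗ (commSub ρA).mkQ = rTensor H (commSub ρA).mkQ ∘ₗ ρA) ∧
      (actQ ∘ₗ rTensor (A ⧸ commSub ρA) mulH =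
      actQ ∘ₗ lTensor H (actQ) ∘ₗ (TensorProduct.assoc k H H (A ⧸ commSub ρA)).toLinearMap) ∧
      (∀ x : (A ⧸ commSub ρA), (actQ) ((1 : H) ⊗ₜ[k] x) = x) ∧
      ((TensorProduct.assoc k (A ⧸ commSub ρA) H H).toLinearMap ∘ₗ rTensor H (ρQ) ∘ₗ (ρQ) =
      lTensor (A ⧸ commSub ρA) Δ ∘ₗ (ρQ)) ∧
      ((TensorProduct.rid k (A ⧸ commSub ρA)).toLinearMap ∘ₗ lTensor (A ⧸ commSub ρA) εH ∘ₗ (ρQ) = LinearMap.id) ∧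
      (ρQ ∘ₗ actQ = aydLRRhs mulH Δ 𝒮 actQ ρQ) ∧
      ((∀ a : A, mulA (lTensor A (mulA ∘ₗ TensorProduct.map (f ∘ₗ 𝒮) f ∘ₗ Δ) (ρA a)) = a) →
        actQ ∘ₗ (TensorProduct.comm k (A ⧸ commSub ρA) H).toLinearMap ∘ₗ ρQ = LinearMap.id) := by
  obtain ⟨actQ, ρQ, hact, hcoact, hayd, hstable⟩ :=
    total_integral_algebra_map_gives_AYD_on_quotient_general
      (ρA := AlgHom.ofLinearMap ρA hρ_one hρ_mul) ⟨hρ_coassoc, hρ_counit⟩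
      (f := AlgHom.ofLinearMap f hf_one hf_mul) hf_comod
  exact ⟨actQ, ρQ, hact, hcoact, hayd.mul_act, hayd.one_act, hayd.coassoc, hayd.counit,
    hayd.compat, fun _ => hstable⟩
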